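/- Let (X,T) be a TDS and Φ a subadditive potential. Then β(Φ) = sup over T-invariant Borel probability measures μ of χ(μ,Φ), where χ(μ,Φ) = lim (1/n)∫ log φₙ dμ and β(Φ) = lim (1/n) log sup_x φₙ(x). -/

import Mathlib

open MeasureTheory Filter Topology Set
open scoped ENNReal NNReal

/-- Positive part of an extended real, as an extended nonnegative real. -/
noncomputable def EReal.posPart (a : EReal) : ℝ≥0∞ :=
  if a = ⊤ then ⊤ else ENNReal.ofReal a.toReal

/-- `EReal`-valued logarithm of a real number: `elog r = -∞` for `r ≤ 0`. -/
noncomputable def elog (r : ℝ) : EReal := ENNReal.log (ENNReal.ofReal r)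

/-- The integral of an `EReal`-valued function, with values in `[-∞, ∞]`. -/
noncomputable def eint {X : Type*} [MeasurableSpace X] (μ : Measure X) (f : X → EReal) : EReal :=
  ((∫⁻ x, (f x).posPart ∂μ : ℝ≥0∞) : EReal) - ((∫⁻ x, (-f x).posPart ∂μ : ℝ≥0∞) : EReal)

/-- `Φ = {log φₙ}` is a subadditive potential for `T`: each `φₙ` is continuous,
nonnegative, and `φ_{n+m}(x) ≤ φₙ(x) · φₘ(Tⁿ x)`. -/
def SubadditivePotential {X : Type*} [TopologicalSpace X] (T : X → X) (φ : ℕ → X → ℝ) : Prop :=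
  (∀ n, 1 ≤ n → Continuous (φ n)) ∧ (∀ n x, 1 ≤ n → 0 ≤ φ n x) ∧
    (∀ m n : ℕ, 1 ≤ m → 1 ≤ n → ∀ x, φ (n + m) x ≤ φ n x * φ m (T^[n] x))

/-!
The inequality `χ(μ, Φ) ≤ β(Φ)` is immediate from `φₙ ≤ sup φₙ`. For the other one, let `yₙ` be a
point where `φₙ` attains its maximum and let `μ` be a limit, along a fixed ultrafilter, of the
uniform measures on the orbit segments `yₙ, T yₙ, …, Tⁿ⁻¹ yₙ`; it is invariant. Multiplying the `m`
ways of cutting an orbit segment into blocks of length `m` gives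
`φₙ(x) ^ m ≤ C ∏_{i < n} max (φₘ(Tⁱ x)) c`, with `C` depending on `m` and `c > 0` but not on `n`
and `x`. Taking logarithms at `x = yₙ`, dividing by `n` and passing to the limit yields
`β m ≤ ∫ log (max φₘ c) dμ`. Letting first `c → 0` and then `m → ∞` gives `β ≤ χ(μ, Φ)`, so the
supremum is attained.
-/

/-! ### The extended logarithm and integral -/

lemma elog_of_pos {r : ℝ} (hr : 0 < r) : elog r = (Real.log r : EReal) :=
  ENNReal.log_ofReal_of_pos hr

lemma elog_mono : Monotone elog := fun _ _ h =>
  ENNReal.log_monotone (ENNReal.ofReal_le_ofReal h)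

lemma continuous_elog : Continuous elog :=
  ENNReal.continuous_log.comp ENNReal.continuous_ofReal

lemma elog_max_zero (r : ℝ) : elog (max r 0) = elog r := by
  rw [elog, ENNReal.ofReal_max, ENNReal.ofReal_zero, max_eq_left zero_le, elog]

lemma elog_le_coe_iff {r a : ℝ} : elog r ≤ a ↔ r ≤ Real.exp a := by
  rw [← Real.log_exp a, ← elog_of_pos (Real.exp_pos a), Real.log_exp, elog, elog,
    ENNReal.log_le_log_iff, ENNReal.ofReal_le_ofReal_iff (Real.exp_pos a).le]

lemma posPart_eq_toENNReal (a : EReal) : a.posPart = a.toENNReal := rfl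

lemma toENNReal_sub_toENNReal_neg (a : EReal) :
    (a.toENNReal : EReal) - ((-a).toENNReal : EReal) = a := by
  rcases le_total 0 a with ha | ha
  · rw [EReal.coe_toENNReal ha, EReal.toENNReal_of_nonpos (EReal.neg_le_zero.2 ha),
      EReal.coe_ennreal_zero, sub_zero]
  · rw [EReal.toENNReal_of_nonpos ha, EReal.coe_toENNReal (EReal.neg_nonneg.2 ha),
      EReal.coe_ennreal_zero, zero_sub, neg_neg]

section Eint

variable {X : Type*} [MeasurableSpace X] {μ : Measure X}

lemma eint_mono {f g : X → EReal} (h : f ≤ g) : eint μ f ≤ eint μ g := by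
  refine EReal.sub_le_sub (EReal.coe_ennreal_le_coe_ennreal_iff.2 ?_)
    (EReal.coe_ennreal_le_coe_ennreal_iff.2 ?_)
  · exact lintegral_mono fun x => EReal.toENNReal_le_toENNReal (h x)
  · exact lintegral_mono fun x => EReal.toENNReal_le_toENNReal (EReal.neg_le_neg_iff.2 (h x))

lemma eint_const [IsProbabilityMeasure μ] (a : EReal) : eint μ (fun _ => a) = a := by
  simp only [eint, posPart_eq_toENNReal, lintegral_const, measure_univ, mul_one,
    toENNReal_sub_toENNReal_neg]

lemma eint_coe {f : X → ℝ} (hf : Integrable f μ) :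
    eint μ (fun x => (f x : EReal)) = ((∫ x, f x ∂μ : ℝ) : EReal) := by
  have hneg : ∫⁻ x, ENNReal.ofReal (-f x) ∂μ ≠ ⊤ := hf.neg.lintegral_lt_top.ne
  rw [integral_eq_lintegral_pos_part_sub_lintegral_neg_part hf, EReal.coe_sub,
    EReal.coe_ennreal_toReal hf.lintegral_lt_top.ne, EReal.coe_ennreal_toReal hneg]
  rfl

lemma tendsto_eint_of_antitone {f : ℕ → X → EReal} {F : X → EReal}
    (hf : ∀ k, Measurable (f k)) (hanti : Antitone f)
    (hlim : ∀ x, Tendsto (fun k => f k x) atTop (𝓝 (F x)))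
    (hfin : ∫⁻ x, (f 0 x).toENNReal ∂μ ≠ ⊤) :
    Tendsto (fun k => eint μ (f k)) atTop (𝓝 (eint μ F)) := by
  have hpos : Tendsto (fun k => ∫⁻ x, (f k x).toENNReal ∂μ) atTop
      (𝓝 (∫⁻ x, (F x).toENNReal ∂μ)) :=
    lintegral_tendsto_of_tendsto_of_antitone (fun k => (hf k).ereal_toENNReal.aemeasurable)
      (ae_of_all _ fun x _ _ hkl => EReal.toENNReal_le_toENNReal (hanti hkl x)) hfin
      (ae_of_all _ fun x => (EReal.continuous_toENNReal.tendsto _).comp (hlim x))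
  have hneg : Tendsto (fun k => ∫⁻ x, (-f k x).toENNReal ∂μ) atTop
      (𝓝 (∫⁻ x, (-F x).toENNReal ∂μ)) :=
    lintegral_tendsto_of_tendsto_of_monotone (fun k => (hf k).neg.ereal_toENNReal.aemeasurable)
      (ae_of_all _ fun x _ _ hkl =>
        EReal.toENNReal_le_toENNReal (EReal.neg_le_neg_iff.2 (hanti hkl x)))
      (ae_of_all _ fun x => (EReal.continuous_toENNReal.tendsto _).comp (hlim x).neg)
  have hFfin : ∫⁻ x, (F x).toENNReal ∂μ ≠ ⊤ :=
    ne_top_of_le_ne_top hfin <| lintegral_mono fun x => EReal.toENNReal_le_toENNReal <|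
      Antitone.le_of_tendsto (fun _ _ hkl => hanti hkl x) (hlim x) 0
  refine (EReal.continuousAt_add (Or.inl ?_) (Or.inl ?_)).tendsto.comp
    (((continuous_coe_ennreal_ereal.tendsto _).comp hpos).prodMk_nhds
      ((continuous_coe_ennreal_ereal.tendsto _).comp hneg).neg)
  · exact EReal.coe_ennreal_eq_top_iff.not.2 hFfin
  · exact EReal.coe_ennreal_ne_bot _

lemma tendsto_eint_elog_max [IsFiniteMeasure μ] {f : X → ℝ} (hf : Measurable f)
    (hbdd : BddAbove (range f)) {u : ℕ → ℝ} (hu : Antitone u) (hu0 : Tendsto u atTop (𝓝 0)) :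
    Tendsto (fun k => eint μ (fun x => elog (max (f x) (u k)))) atTop
      (𝓝 (eint μ (fun x => elog (f x)))) := by
  obtain ⟨B, hB⟩ := hbdd
  refine tendsto_eint_of_antitone
    (fun k => continuous_elog.measurable.comp (hf.max measurable_const))
    (fun _ _ hkl x => elog_mono (max_le_max_left _ (hu hkl))) (fun x => ?_) ?_
  · rw [← elog_max_zero (f x)]
    exact (continuous_elog.tendsto _).comp (tendsto_const_nhds.max hu0)
  · refine (lintegral_mono (g := fun _ => (elog (max B (u 0))).toENNReal) fun x =>
      EReal.toENNReal_le_toENNReal (elog_mono (max_le_max_right _ (hB ⟨x, rfl⟩)))).trans_lt ?_ |>.ne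
    rw [lintegral_const]
    refine ENNReal.mul_lt_top (lt_top_iff_ne_top.2 (EReal.toENNReal_ne_top_iff.2 ?_))
      (measure_lt_top μ _)
    exact ENNReal.log_eq_top_iff.not.2 ENNReal.ofReal_ne_top

end Eint

/-! ### Limits of Birkhoff averages -/

section Birkhoff

variable {X : Type*}

lemma birkhoffAverage_comp (R : Type*) {M : Type*} [DivisionSemiring R] [AddCommMonoid M]
    [Module R M] (T : X → X) (f : X → M) (n : ℕ) (x : X) :
    birkhoffAverage R T (f ∘ T) n x = birkhoffAverage R T f n (T x) := by
  simp only [birkhoffAverage, birkhoffSum, Function.comp_apply, ← Function.iterate_succ_apply',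
    Function.iterate_succ_apply]

section Bounded

variable (𝕜 : Type*) {E : Type*} [RCLike 𝕜] [NormedAddCommGroup E] [NormedSpace 𝕜 E]
  {f : X → E} {C : ℝ}

lemma norm_birkhoffAverage_le (T : X → X) (hC : 0 ≤ C) (hf : ∀ x, ‖f x‖ ≤ C) (n : ℕ) (x : X) :
    ‖birkhoffAverage 𝕜 T f n x‖ ≤ C := by
  rw [birkhoffAverage, birkhoffSum, norm_smul, norm_inv, RCLike.norm_natCast]
  refine inv_mul_le_of_le_mul₀ n.cast_nonneg hC ?_
  simpa only [Finset.sum_const, Finset.card_range, nsmul_eq_mul] using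
    norm_sum_le_of_le (Finset.range n) fun i _ => hf (T^[i] x)

lemma exists_tendsto_birkhoffAverage [ProperSpace E] (T : X → X) (hC : 0 ≤ C)
    (hf : ∀ x, ‖f x‖ ≤ C) (l : Ultrafilter ℕ) (y : ℕ → X) :
    ∃ a, Tendsto (fun n => birkhoffAverage 𝕜 T f n (y n)) l (𝓝 a) := by
  obtain ⟨a, -, ha⟩ := (isCompact_closedBall (0 : E) C).ultrafilter_le_nhds
    (l.map fun n => birkhoffAverage 𝕜 T f n (y n))
    (le_principal_iff.2 <| mem_map.2 <| univ_mem' fun n =>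
      mem_closedBall_zero_iff.2 (norm_birkhoffAverage_le 𝕜 T hC hf n (y n)))
  exact ⟨a, ha⟩

lemma tendsto_birkhoffAverage_apply_sub (T : X → X) (hf : Bornology.IsBounded (range f))
    (y : ℕ → X) :
    Tendsto (fun n => birkhoffAverage 𝕜 T f n (T (y n)) - birkhoffAverage 𝕜 T f n (y n))
      atTop (𝓝 0) := by
  obtain ⟨D, hD⟩ := Metric.isBounded_range_iff.1 hf
  refine squeeze_zero_norm (fun n => ?_) (tendsto_const_div_atTop_nhds_zero_nat D)
  rw [← dist_eq_norm, dist_birkhoffAverage_apply_birkhoffAverage]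
  gcongr
  exact hD _ _

end Bounded

variable [TopologicalSpace X] [CompactSpace X]

open scoped CompactlySupported in
/-- The positive linear functional `f ↦ lim (1/n) ∑_{i < n} f (Tⁱ yₙ)`, the limit being taken along
the ultrafilter `l`. It represents the limit of the uniform measures on the orbit segments starting
at `yₙ`; on a compact space all continuous functions are compactly supported. -/
noncomputable def birkhoffLimit (T : X → X) (l : Ultrafilter ℕ) (y : ℕ → X) :
    C_c(X, ℝ) →ₚ[ℝ] ℝ :=
  have exists_lim (f : C_c(X, ℝ)) :=
    exists_tendsto_birkhoffAverage ℝ T (norm_nonneg _) f.toContinuousMap.norm_coe_le_norm l y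
  have tendsto_choose (f : C_c(X, ℝ)) := (exists_lim f).choose_spec
  { toFun f := (exists_lim f).choose
    map_add' f g := tendsto_nhds_unique (tendsto_choose (f + g)) <|
      ((tendsto_choose f).add (tendsto_choose g)).congr fun n => by
        simp only [birkhoffAverage, birkhoffSum, ← smul_add, ← Finset.sum_add_distrib]
        rfl
    map_smul' a f := tendsto_nhds_unique (tendsto_choose (a • f)) <|
      ((tendsto_choose f).const_smul a).congr fun n => by
        simp only [birkhoffAverage, birkhoffSum, smul_comm a, Finset.smul_sum]
        rfl
    monotone' f g hfg := le_of_tendsto_of_tendsto' (tendsto_choose f) (tendsto_choose g) fun n =>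
      mul_le_mul_of_nonneg_left (Finset.sum_le_sum fun i _ => hfg (T^[i] (y n))) (by positivity) }

open scoped CompactlySupported in
lemma tendsto_birkhoffLimit (T : X → X) (l : Ultrafilter ℕ) (y : ℕ → X) (f : C_c(X, ℝ)) :
    Tendsto (fun n => birkhoffAverage ℝ T f n (y n)) l (𝓝 (birkhoffLimit T l y f)) :=
  (exists_tendsto_birkhoffAverage ℝ T (norm_nonneg _)
    f.toContinuousMap.norm_coe_le_norm l y).choose_spec

variable [T2Space X] [MeasurableSpace X] [BorelSpace X]

lemma exists_regular_tendsto_birkhoffAverage (T : X → X) {l : Ultrafilter ℕ}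
    (hl : (l : Filter ℕ) ≤ atTop) (y : ℕ → X) :
    ∃ μ : ProbabilityMeasure X, (μ : Measure X).Regular ∧ ∀ f : C(X, ℝ),
      Tendsto (fun n => birkhoffAverage ℝ T f n (y n)) l (𝓝 (∫ x, f x ∂(μ : Measure X))) := by
  let μ := RealRMK.rieszMeasure (birkhoffLimit T l y)
  have hlim (f : C(X, ℝ)) :
      Tendsto (fun n => birkhoffAverage ℝ T f n (y n)) l (𝓝 (∫ x, f x ∂μ)) := by
    have := tendsto_birkhoffLimit T l y ⟨f, .of_compactSpace f⟩
    rwa [← RealRMK.integral_rieszMeasure] at this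
  have hone : μ.real univ = 1 := by
    have hlim_one := hlim 1
    simp only [ContinuousMap.one_apply, integral_const, smul_eq_mul, mul_one] at hlim_one
    refine tendsto_nhds_unique hlim_one (tendsto_const_nhds.congr' ?_)
    filter_upwards [hl (eventually_ne_atTop 0)] with n hn
    exact (congrFun (birkhoffAverage_of_comp_eq ℝ (f := T) (g := fun _ => (1 : ℝ)) rfl
      (Nat.cast_ne_zero.2 hn)) (y n)).symm
  have hμ : IsProbabilityMeasure μ := isProbabilityMeasure_iff_real.2 hone
  exact ⟨⟨μ, hμ⟩, RealRMK.regular_rieszMeasure _, hlim⟩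

lemma exists_invariant_tendsto_birkhoffAverage {T : X → X} (hT : Continuous T) {l : Ultrafilter ℕ}
    (hl : (l : Filter ℕ) ≤ atTop) (y : ℕ → X) :
    ∃ μ : ProbabilityMeasure X, Measure.map T (μ : Measure X) = (μ : Measure X) ∧
      ∀ f : C(X, ℝ),
        Tendsto (fun n => birkhoffAverage ℝ T f n (y n)) l (𝓝 (∫ x, f x ∂(μ : Measure X))) := by
  obtain ⟨μ, hreg, hlim⟩ := exists_regular_tendsto_birkhoffAverage T hl y
  refine ⟨μ, ?_, hlim⟩
  have : (Measure.map T (μ : Measure X)).InnerRegularCompactLTTop :=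
    Measure.InnerRegularCompactLTTop.map_of_continuous hT
  refine Measure.ext_of_integral_eq_on_compactlySupported fun f => ?_
  rw [integral_map hT.aemeasurable (map_continuous f).aestronglyMeasurable]
  let g : C(X, ℝ) := f.toContinuousMap
  have hbdd : Bornology.IsBounded (range g) := (isCompact_range (map_continuous g)).isBounded
  have hcomp := hlim (g.comp ⟨T, hT⟩)
  have hshift : Tendsto (fun n => birkhoffAverage ℝ T g n (T (y n))) l
      (𝓝 (∫ x, g x ∂(μ : Measure X))) := by
    simpa only [sub_add_cancel, zero_add] using
      ((tendsto_birkhoffAverage_apply_sub ℝ T hbdd y).mono_left hl).add (hlim g)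
  exact tendsto_nhds_unique hcomp
    (hshift.congr fun n => (birkhoffAverage_comp ℝ T g n (y n)).symm)

end Birkhoff

/-! ### Submultiplicative sequences of functions -/

section Submultiplicative

variable {X R : Type*} [CommSemiring R] [PartialOrder R] [IsOrderedRing R]
  {T : X → X} {φ : ℕ → X → R} {m : ℕ} {M : R}

-- Passing from `(n, T x)` to `(n + 1, x)` changes only the factor of the longest segment, from
-- which submultiplicativity splits off a block of length `m`.
lemma prod_iterate_le_pow_mul_prod_iterate (hnn : ∀ n x, 1 ≤ n → 0 ≤ φ n x)
    (hsub : ∀ m n : ℕ, 1 ≤ m → 1 ≤ n → ∀ x, φ (n + m) x ≤ φ n x * φ m (T^[n] x))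
    (hm : 1 ≤ m) (hM : ∀ j, 1 ≤ j → j ≤ m → ∀ x, φ j x ≤ M) (n : ℕ) (x : X) :
    ∏ j ∈ Finset.range m, φ (n + (m - j)) (T^[j] x) ≤
      M ^ m * ∏ i ∈ Finset.range n, φ m (T^[i] x) := by
  obtain ⟨k, rfl⟩ := Nat.exists_eq_add_of_le' hm
  induction n generalizing x with
  | zero =>
    calc ∏ j ∈ Finset.range (k + 1), φ (0 + (k + 1 - j)) (T^[j] x)
        ≤ ∏ _j ∈ Finset.range (k + 1), M :=
          Finset.prod_le_prod (fun j hj => hnn _ _ (by grind)) fun j hj =>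
            hM _ (by grind) (by lia) _
      _ = M ^ (k + 1) * ∏ i ∈ Finset.range 0, φ (k + 1) (T^[i] x) := by
          rw [Finset.prod_const, Finset.card_range, Finset.prod_range_zero, mul_one]
  | succ n ih =>
    let G (j : ℕ) : R := φ (n + (k + 1 - j)) (T^[j] (T x))
    have hG (j : ℕ) (hj : j ∈ Finset.range k) :
        φ (n + 1 + (k + 1 - (j + 1))) (T^[j + 1] x) = G j := by
      simp only [G, Function.iterate_succ_apply]
      congr 1
      grind
    have hfirst : φ (n + 1 + (k + 1)) x ≤ φ (k + 1) x * G k := by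
      simpa only [G, ← Function.iterate_succ_apply, add_comm (k + 1), Nat.add_sub_cancel_left]
        using hsub (n + 1) (k + 1) n.succ_pos hm x
    have hG0 : 0 ≤ ∏ j ∈ Finset.range k, G j :=
      Finset.prod_nonneg fun j hj => hnn _ _ (by grind)
    calc ∏ j ∈ Finset.range (k + 1), φ (n + 1 + (k + 1 - j)) (T^[j] x)
        = (∏ j ∈ Finset.range k, G j) * φ (n + 1 + (k + 1)) x := by
          rw [Finset.prod_range_succ', Finset.prod_congr rfl hG]
          rfl
      _ ≤ (∏ j ∈ Finset.range k, G j) * (φ (k + 1) x * G k) :=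
          mul_le_mul_of_nonneg_left hfirst hG0
      _ = φ (k + 1) x * ∏ j ∈ Finset.range (k + 1), G j := by
          rw [Finset.prod_range_succ, mul_left_comm]
      _ ≤ φ (k + 1) x * (M ^ (k + 1) * ∏ i ∈ Finset.range n, φ (k + 1) (T^[i] (T x))) :=
          mul_le_mul_of_nonneg_left (ih (T x)) (hnn _ _ hm)
      _ = M ^ (k + 1) * ∏ i ∈ Finset.range (n + 1), φ (k + 1) (T^[i] x) := by
          rw [Finset.prod_range_succ', mul_left_comm, mul_comm (φ (k + 1) x)]
          rfl

lemma pow_le_pow_mul_prod_iterate (hnn : ∀ n x, 1 ≤ n → 0 ≤ φ n x)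
    (hsub : ∀ m n : ℕ, 1 ≤ m → 1 ≤ n → ∀ x, φ (n + m) x ≤ φ n x * φ m (T^[n] x))
    (hm : 1 ≤ m) (hM1 : 1 ≤ M) (hM : ∀ j, 1 ≤ j → j ≤ m → ∀ x, φ j x ≤ M) (n : ℕ) (x : X) :
    φ (n + m) x ^ m ≤ M ^ (2 * m) * ∏ i ∈ Finset.range n, φ m (T^[i] x) := by
  have hM0 : 0 ≤ M := zero_le_one.trans hM1
  have hshift (j : ℕ) (hj : j < m) : φ (n + m) x ≤ M * φ (n + (m - j)) (T^[j] x) := by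
    have hnn' : 0 ≤ φ (n + (m - j)) (T^[j] x) := hnn _ _ (by lia)
    rcases j.eq_zero_or_pos with rfl | hj0
    · exact le_mul_of_one_le_left hnn' hM1
    · have hsplit := hsub (n + (m - j)) j (by lia) hj0 x
      rw [show j + (n + (m - j)) = n + m by lia] at hsplit
      exact hsplit.trans (mul_le_mul_of_nonneg_right (hM j hj0 hj.le x) hnn')
  calc φ (n + m) x ^ m
      = ∏ _j ∈ Finset.range m, φ (n + m) x := by rw [Finset.prod_const, Finset.card_range]
    _ ≤ ∏ j ∈ Finset.range m, M * φ (n + (m - j)) (T^[j] x) :=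
        Finset.prod_le_prod (fun _ _ => hnn _ _ (by lia)) fun j hj =>
          hshift j (Finset.mem_range.1 hj)
    _ = M ^ m * ∏ j ∈ Finset.range m, φ (n + (m - j)) (T^[j] x) := by
        rw [Finset.prod_mul_distrib, Finset.prod_const, Finset.card_range]
    _ ≤ M ^ m * (M ^ m * ∏ i ∈ Finset.range n, φ m (T^[i] x)) :=
        mul_le_mul_of_nonneg_left (prod_iterate_le_pow_mul_prod_iterate hnn hsub hm hM n x)
          (pow_nonneg hM0 m)
    _ = M ^ (2 * m) * ∏ i ∈ Finset.range n, φ m (T^[i] x) := by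
        rw [← mul_assoc, ← pow_add, two_mul]

end Submultiplicative

/-! ### The maximal Lyapunov exponent -/

namespace SubadditivePotential

variable {X : Type*} [TopologicalSpace X] {T : X → X} {φ : ℕ → X → ℝ}

lemma continuous_log_max (hφ : SubadditivePotential T φ) {m : ℕ} (hm : 1 ≤ m) {c : ℝ}
    (hc : 0 < c) : Continuous fun x => Real.log (max (φ m x) c) :=
  ((hφ.1 m hm).max continuous_const).log fun _ => (lt_max_of_lt_right hc).ne'

variable [CompactSpace X]

lemma exists_forall_le (hφ : SubadditivePotential T φ) (m : ℕ) :
    ∃ M, 1 ≤ M ∧ ∀ j, 1 ≤ j → j ≤ m → ∀ x, φ j x ≤ M := by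
  have hbdd : BddAbove (⋃ j ∈ Finset.Icc 1 m, range (φ j)) :=
    (Finset.Icc 1 m).finite_toSet.bddAbove_biUnion.2 fun j hj =>
      (isCompact_range (hφ.1 j (Finset.mem_Icc.1 hj).1)).bddAbove
  obtain ⟨M, hM⟩ := hbdd
  refine ⟨max 1 M, le_max_left 1 M, fun j hj1 hjm x => le_max_of_le_right (hM ?_)⟩
  exact mem_biUnion (Finset.mem_Icc.2 ⟨hj1, hjm⟩) ⟨x, rfl⟩

-- Truncation at `c > 0` allows padding the product from `n` to `n + m` factors, and keeps its
-- logarithm finite.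
lemma exists_pow_le_mul_prod_iterate_max (hφ : SubadditivePotential T φ) {m : ℕ} (hm : 1 ≤ m)
    {c : ℝ} (hc : 0 < c) :
    ∃ C > 0, ∀ n x,
      φ (n + m) x ^ m ≤ C * ∏ i ∈ Finset.range (n + m), max (φ m (T^[i] x)) c := by
  obtain ⟨M, hM1, hM⟩ := hφ.exists_forall_le m
  have hM0 : 0 < M := one_pos.trans_le hM1
  refine ⟨M ^ (2 * m) / c ^ m, by positivity, fun n x => ?_⟩
  have htail : c ^ m ≤ ∏ i ∈ Finset.range m, max (φ m (T^[n + i] x)) c := by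
    simpa only [Finset.prod_const, Finset.card_range] using
      Finset.prod_le_prod (s := Finset.range m) (fun _ _ => hc.le)
        fun i _ => le_max_right (φ m (T^[n + i] x)) c
  calc φ (n + m) x ^ m
      ≤ M ^ (2 * m) * ∏ i ∈ Finset.range n, φ m (T^[i] x) :=
        pow_le_pow_mul_prod_iterate hφ.2.1 hφ.2.2 hm hM1 hM n x
    _ ≤ M ^ (2 * m) * ∏ i ∈ Finset.range n, max (φ m (T^[i] x)) c :=
        mul_le_mul_of_nonneg_left
          (Finset.prod_le_prod (fun _ _ => hφ.2.1 _ _ hm) fun _ _ => le_max_left _ _)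
          (pow_nonneg hM0.le _)
    _ = M ^ (2 * m) / c ^ m * ((∏ i ∈ Finset.range n, max (φ m (T^[i] x)) c) * c ^ m) := by
        field_simp
    _ ≤ M ^ (2 * m) / c ^ m * ∏ i ∈ Finset.range (n + m), max (φ m (T^[i] x)) c := by
        rw [Finset.prod_range_add]
        gcongr

lemma exists_elog_le_birkhoffSum (hφ : SubadditivePotential T φ) {m : ℕ} (hm : 1 ≤ m)
    {c : ℝ} (hc : 0 < c) :
    ∃ D : ℝ, ∀ n x, elog (φ (n + m) x) ≤
      ((D + birkhoffSum T (fun z => Real.log (max (φ m z) c)) (n + m) x) / m : ℝ) := by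
  obtain ⟨C, hC, hle⟩ := hφ.exists_pow_le_mul_prod_iterate_max hm hc
  refine ⟨Real.log C, fun n x => elog_le_coe_iff.2 ?_⟩
  refine (pow_le_pow_iff_left₀ (hφ.2.1 _ _ (by lia)) (Real.exp_pos _).le
    (Nat.one_le_iff_ne_zero.1 hm)).1 ((hle n x).trans_eq ?_)
  rw [← Real.exp_nat_mul, mul_div_cancel₀ _ (by positivity), Real.exp_add, Real.exp_log hC,
    birkhoffSum, Real.exp_sum]
  exact congrArg _ (Finset.prod_congr rfl fun i _ =>
    (Real.exp_log (lt_max_of_lt_right hc)).symm)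

section Limit

variable [MeasurableSpace X] {μ : Measure X} {l : Filter ℕ} [l.NeBot] {y : ℕ → X} {b : EReal}

lemma le_integral_log_max_div (hφ : SubadditivePotential T φ) (hl : l ≤ atTop)
    (hb : Tendsto (fun n : ℕ => elog (φ n (y n)) / (n : EReal)) l (𝓝 b))
    (hμ : ∀ f : C(X, ℝ),
      Tendsto (fun n => birkhoffAverage ℝ T f n (y n)) l (𝓝 (∫ x, f x ∂μ)))
    {m : ℕ} (hm : 1 ≤ m) {c : ℝ} (hc : 0 < c) :
    b ≤ (((∫ x, Real.log (max (φ m x) c) ∂μ) / m : ℝ) : EReal) := by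
  obtain ⟨D, hD⟩ := hφ.exists_elog_le_birkhoffSum hm hc
  let g : C(X, ℝ) := ⟨_, hφ.continuous_log_max hm hc⟩
  have hlim : Tendsto (fun n : ℕ => (D / n + birkhoffAverage ℝ T g n (y n)) / m) l
      (𝓝 ((∫ x, g x ∂μ) / m)) := by
    simpa only [zero_add] using
      (((tendsto_const_div_atTop_nhds_zero_nat D).mono_left hl).add (hμ g)).div_const (m : ℝ)
  refine le_of_tendsto_of_tendsto hb ((continuous_coe_real_ereal.tendsto _).comp hlim) ?_
  filter_upwards [hl (eventually_ge_atTop m)] with n hn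
  have hDn := hD (n - m) (y n)
  rw [Nat.sub_add_cancel hn] at hDn
  calc elog (φ n (y n)) / (n : EReal)
      ≤ (((D + birkhoffSum T g n (y n)) / m : ℝ) : EReal) / ((n : ℝ) : EReal) :=
        EReal.div_le_div_right_of_nonneg (by positivity) hDn
    _ = (((D / n + birkhoffAverage ℝ T g n (y n)) / m : ℝ) : EReal) := by
        rw [← EReal.coe_div, birkhoffAverage, smul_eq_mul]
        congr 1
        ring

lemma le_eint_elog_div [OpensMeasurableSpace X] [IsFiniteMeasure μ]
    (hφ : SubadditivePotential T φ) (hl : l ≤ atTop)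
    (hb : Tendsto (fun n : ℕ => elog (φ n (y n)) / (n : EReal)) l (𝓝 b))
    (hμ : ∀ f : C(X, ℝ),
      Tendsto (fun n => birkhoffAverage ℝ T f n (y n)) l (𝓝 (∫ x, f x ∂μ)))
    {m : ℕ} (hm : 1 ≤ m) :
    b ≤ eint μ (fun x => elog (φ m x)) / (m : EReal) := by
  have hm0 : (0 : EReal) < m := by exact_mod_cast hm
  rw [EReal.le_div_iff_mul_le hm0 (EReal.natCast_ne_top m)]
  refine ge_of_tendsto' (tendsto_eint_elog_max (hφ.1 m hm).measurable
    (isCompact_range (hφ.1 m hm)).bddAbove (fun _ _ => Nat.one_div_le_one_div)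
    tendsto_one_div_add_atTop_nhds_zero_nat) fun k => ?_
  have hc : (0 : ℝ) < 1 / (k + 1) := Nat.one_div_pos_of_nat
  have hint : Integrable (fun x => Real.log (max (φ m x) (1 / (k + 1)))) μ :=
    (hφ.continuous_log_max hm hc).integrable_of_hasCompactSupport (.of_compactSpace _)
  simp only [elog_of_pos (lt_max_of_lt_right hc), eint_coe hint]
  rw [← EReal.le_div_iff_mul_le hm0 (EReal.natCast_ne_top m)]
  exact hφ.le_integral_log_max_div hl hb hμ hm hc

end Limit

lemma eint_elog_le_elog_iSup [MeasurableSpace X] (hφ : SubadditivePotential T φ) (μ : Measure X)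
    [IsProbabilityMeasure μ] {n : ℕ} (hn : 1 ≤ n) :
    eint μ (fun x => elog (φ n x)) ≤ elog (⨆ x, φ n x) :=
  (eint_mono fun x => elog_mono (le_ciSup (isCompact_range (hφ.1 n hn)).bddAbove x)).trans_eq
    (eint_const _)

lemma exists_forall_eq_iSup [Nonempty X] (hφ : SubadditivePotential T φ) :
    ∃ y : ℕ → X, ∀ n, 1 ≤ n → φ n (y n) = ⨆ x, φ n x := by
  have hmax (n : ℕ) : ∃ y, 1 ≤ n → φ n y = ⨆ x, φ n x := by
    by_cases hn : 1 ≤ n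
    · obtain ⟨y, hy⟩ := (isCompact_range (hφ.1 n hn)).sSup_mem (range_nonempty _)
      exact ⟨y, fun _ => hy⟩
    · exact ⟨Classical.arbitrary X, fun h => absurd h hn⟩
  exact Classical.skolem.1 hmax

end SubadditivePotential

theorem maximal_lyapunov_exponent_eq_sup_over_invariant_measures_general
    {X : Type*} [TopologicalSpace X] [T2Space X] [CompactSpace X] [Nonempty X]
    [MeasurableSpace X] [BorelSpace X]
    (T : X → X) (hT : Continuous T)
    (φ : ℕ → X → ℝ) (hφ : SubadditivePotential T φ)
    (β : EReal)
    (hβ : Tendsto (fun n : ℕ => elog (⨆ x, φ n x) / (n : EReal)) atTop (𝓝 β))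
    (χ : ProbabilityMeasure X → EReal)
    (hχ : ∀ μ : ProbabilityMeasure X, Measure.map T (μ : Measure X) = (μ : Measure X) →
      Tendsto (fun n : ℕ => eint (μ : Measure X) (fun x => elog (φ n x)) / (n : EReal))
        atTop (𝓝 (χ μ))) :
    IsGreatest (χ '' {μ : ProbabilityMeasure X |
      Measure.map T (μ : Measure X) = (μ : Measure X)}) β := by
  have hχ_le (μ : ProbabilityMeasure X) (hμ : Measure.map T (μ : Measure X) = μ) : χ μ ≤ β := by
    refine le_of_tendsto_of_tendsto (hχ μ hμ) hβ ?_
    filter_upwards [eventually_ge_atTop 1] with n hn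
    exact EReal.div_le_div_right_of_nonneg (by positivity) (hφ.eint_elog_le_elog_iSup _ hn)
  obtain ⟨y, hy⟩ := hφ.exists_forall_eq_iSup
  obtain ⟨μ, hμ, hlim⟩ :=
    exists_invariant_tendsto_birkhoffAverage hT Nat.hyperfilter_le_atTop y
  have hβ_lim : Tendsto (fun n : ℕ => elog (φ n (y n)) / (n : EReal)) (hyperfilter ℕ) (𝓝 β) := by
    refine (hβ.congr' ?_).mono_left Nat.hyperfilter_le_atTop
    filter_upwards [eventually_ge_atTop 1] with n hn
    rw [hy n hn]
  have hβ_le : β ≤ χ μ := by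
    refine ge_of_tendsto (hχ μ hμ) ?_
    filter_upwards [eventually_ge_atTop 1] with m hm
    exact hφ.le_eint_elog_div Nat.hyperfilter_le_atTop hβ_lim hlim hm
  exact ⟨⟨μ, hμ, (hχ_le μ hμ).antisymm hβ_le⟩, forall_mem_image.2 hχ_le⟩

/-- β(Φ) equals the supremum of the Lyapunov exponents χ(μ,Φ) over
all T-invariant Borel probability measures μ. -/
theorem maximal_lyapunov_exponent_eq_sup_over_invariant_measures
    {X : Type*} [MetricSpace X] [CompactSpace X] [Nonempty X]
    [MeasurableSpace X] [BorelSpace X]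
    (T : X → X) (hT : Continuous T)
    (φ : ℕ → X → ℝ) (hφ : SubadditivePotential T φ)
    (β : EReal)
    (hβ : Tendsto (fun n : ℕ => elog (⨆ x, φ n x) / (n : EReal)) atTop (𝓝 β))
    (χ : ProbabilityMeasure X → EReal)
    (hχ : ∀ μ : ProbabilityMeasure X, Measure.map T (μ : Measure X) = (μ : Measure X) →
      Tendsto (fun n : ℕ => eint (μ : Measure X) (fun x => elog (φ n x)) / (n : EReal))
        atTop (𝓝 (χ μ))) :
    β = sSup (χ '' {μ : ProbabilityMeasure X |
          Measure.map T (μ : Measure X) = (μ : Measure X)}) :=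
  (maximal_lyapunov_exponent_eq_sup_over_invariant_measures_general T hT φ hφ β hβ χ
    hχ).csSup_eq.symm
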